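/- In the tensor-triangulated adjunction setting described in the context, let G be an object of 𝒯 and suppose the unit 1_𝒮 belongs to ⟨f_*G⟩̄_n for some n ≥ 0. Then every object E of 𝒮 belongs to ⟨f_*(G ⊗ f^*E)⟩̄_n. -/

import Mathlib

/-! Tensoring with `E` is an exact coproduct-preserving endofunctor, and any such functor `Φ`
sends `⟨G⟩̄ₙ` into `⟨Φ G⟩̄ₙ` (`map_mem_bigLevel`): for `n = 1` because the preimage under `Φ` of
`⟨Φ G⟩̄₁` is closed under shifts, coproducts and retracts, and for larger `n` by induction along
distinguished triangles. Hence `1 ∈ ⟨f_* G⟩̄ₙ` gives `E ≅ 1 ⊗ E ∈ ⟨f_* G ⊗ E⟩̄ₙ`, and the braiding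
together with the projection formula identifies the generator `f_* G ⊗ E` with
`f_* (G ⊗ f^* E)`. -/

open CategoryTheory Limits Pretriangulated MonoidalCategory

universe v u v₂ u₂

namespace Stmt

variable {C : Type u} [Category.{v} C]

/-- `X` is a retract (direct summand) of `Y`. -/
def IsRetract (X Y : C) : Prop := ∃ (i : X ⟶ Y) (p : Y ⟶ X), i ≫ p = 𝟙 X

section Big

variable [HasZeroObject C] [Preadditive C] [HasShift C ℤ]
  [∀ n : ℤ, (shiftFunctor C n).Additive] [Pretriangulated C]

/-- The objects of `⟨G⟩̄₁`: the smallest collection of objects containing `G` that is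
closed under shifts, arbitrary small coproducts, and direct summands (retracts). -/
def bigOne (G : C) : Set C :=
  ⋂₀ {S : Set C | G ∈ S ∧ (∀ X ∈ S, ∀ n : ℤ, (X⟦n⟧ : C) ∈ S) ∧
      (∀ (ι : Type v) (f : ι → C) (_ : HasCoproduct f), (∀ i, f i ∈ S) → (∐ f) ∈ S) ∧
      (∀ X Y : C, Y ∈ S → IsRetract X Y → X ∈ S)}

/-- The objects of `⟨G⟩̄ₙ`: `⟨G⟩̄₀` consists of the objects isomorphic to `0`;
`⟨G⟩̄₁` is `bigOne G`; for `n ≥ 2`, `⟨G⟩̄ₙ` consists of the direct summands of objects `E`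
fitting in a distinguished triangle `A ⟶ E ⟶ B ⟶ A⟦1⟧` with `A ∈ ⟨G⟩̄ₙ₋₁` and `B ∈ ⟨G⟩̄₁`. -/
def bigLevel (G : C) : ℕ → Set C
  | 0 => {X | IsZero X}
  | 1 => bigOne G
  | (n + 2) => {X | ∃ (E A B : C) (f : A ⟶ E) (g : E ⟶ B) (h : B ⟶ A⟦(1 : ℤ)⟧),
      (Triangle.mk f g h ∈ distTriang C) ∧ A ∈ bigLevel G (n + 1) ∧ B ∈ bigOne G ∧
      IsRetract X E}

end Big

lemma IsRetract.of_iso {X Y : C} (e : X ≅ Y) : IsRetract X Y := ⟨e.hom, e.inv, by simp⟩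

lemma IsRetract.trans {X Y Z : C} (h₁ : IsRetract X Y) (h₂ : IsRetract Y Z) :
    IsRetract X Z := by
  obtain ⟨i, p, h⟩ := h₁
  obtain ⟨j, q, hjq⟩ := h₂
  refine ⟨i ≫ j, q ≫ p, ?_⟩
  rw [Category.assoc, ← Category.assoc j, hjq, Category.id_comp, h]

lemma IsRetract.map {D : Type u₂} [Category.{v₂} D] (Φ : C ⥤ D) {X Y : C}
    (h : IsRetract X Y) : IsRetract (Φ.obj X) (Φ.obj Y) := by
  obtain ⟨i, p, h⟩ := h
  exact ⟨Φ.map i, Φ.map p, by rw [← Φ.map_comp, h, Φ.map_id]⟩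

section Big

variable [HasZeroObject C] [Preadditive C] [HasShift C ℤ]
  [∀ n : ℤ, (shiftFunctor C n).Additive] [Pretriangulated C]

lemma self_mem_bigOne (G : C) : G ∈ bigOne G := fun _ hS => hS.1

lemma bigOne_shift {G X : C} (h : X ∈ bigOne G) (n : ℤ) : (X⟦n⟧ : C) ∈ bigOne G :=
  fun S hS => hS.2.1 X (h S hS) n

lemma bigOne_coproduct {G : C} {ι : Type v} (f : ι → C) [hf : HasCoproduct f]
    (h : ∀ i, f i ∈ bigOne G) : (∐ f) ∈ bigOne G :=
  fun S hS => hS.2.2.1 ι f hf fun i => h i S hS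

lemma bigOne_retract {G X Y : C} (h : Y ∈ bigOne G) (r : IsRetract X Y) : X ∈ bigOne G :=
  fun S hS => hS.2.2.2 X Y (h S hS) r

lemma bigLevel_retract {G X Y : C} : ∀ {n : ℕ}, Y ∈ bigLevel G n → IsRetract X Y →
    X ∈ bigLevel G n
  | 0, h, ⟨i, p, hip⟩ => by
    have hY : IsZero Y := h
    change IsZero X
    rw [IsZero.iff_id_eq_zero, ← hip, hY.eq_of_tgt i 0, zero_comp]
  | 1, h, r => bigOne_retract h r
  | _ + 2, ⟨E, A, B, f, g, k, hT, hA, hB, r'⟩, r =>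
    ⟨E, A, B, f, g, k, hT, hA, hB, r.trans r'⟩

variable {D : Type u₂} [Category.{v} D] [HasZeroObject D] [Preadditive D] [HasShift D ℤ]
  [∀ n : ℤ, (shiftFunctor D n).Additive] [Pretriangulated D]
  (Φ : C ⥤ D) [Φ.CommShift ℤ] [Φ.IsTriangulated]
  [∀ J : Type v, PreservesColimitsOfShape (Discrete J) Φ]

/-- The generator is allowed to change along a retraction `r`, so that the image of `G` only has
to be known up to isomorphism. -/
lemma map_mem_bigOne {G : C} {G' : D} (r : IsRetract (Φ.obj G) G') {X : C}
    (h : X ∈ bigOne G) : Φ.obj X ∈ bigOne G' := by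
  refine h {X | Φ.obj X ∈ bigOne G'} ⟨bigOne_retract (self_mem_bigOne G') r, ?_, ?_, ?_⟩
  · intro X hX n
    exact bigOne_retract (bigOne_shift hX n) (.of_iso ((Φ.commShiftIso n).app X))
  · intro ι f _ hf
    have : HasCoproduct fun i => Φ.obj (f i) :=
      ⟨⟨_, isColimitCofanMkObjOfIsColimit Φ f _ (coproductIsCoproduct f)⟩⟩
    exact bigOne_retract (bigOne_coproduct _ hf) (.of_iso (PreservesCoproduct.iso Φ f))
  · intro X Y hY r'
    exact bigOne_retract hY (r'.map Φ)

/-- An exact coproduct-preserving functor does not increase the level with respect to a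
generator. -/
lemma map_mem_bigLevel {G : C} {G' : D} (r : IsRetract (Φ.obj G) G') : ∀ {n : ℕ} {X : C},
    X ∈ bigLevel G n → Φ.obj X ∈ bigLevel G' n
  | 0, _, h => Φ.map_isZero h
  | 1, _, h => map_mem_bigOne Φ r h
  | _ + 2, _, ⟨E, A, B, f, g, k, hT, hA, hB, r'⟩ =>
    ⟨Φ.obj E, Φ.obj A, Φ.obj B, Φ.map f, Φ.map g, Φ.map k ≫ (Φ.commShiftIso (1 : ℤ)).hom.app A,
      Φ.map_distinguished _ hT, map_mem_bigLevel r hA, map_mem_bigOne Φ r hB, r'.map Φ⟩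

end Big

section Adjunction

/- The tensor-triangulated adjunction setting: `S` (𝒮) and `T` (𝒯) are triangulated
categories admitting all small coproducts, each equipped with a symmetric monoidal
structure whose tensoring endofunctors are exact and preserve small coproducts;
`F : S ⥤ T` (the functor `f^*`) is an exact strong monoidal functor preserving small
coproducts, with a right adjoint `Fst : T ⥤ S` (the functor `f_*`) which is exact and
preserves small coproducts, satisfying the projection formula
`A ⊗ f_*(B) ≅ f_*(B ⊗ f^*A)`. -/

variable {S : Type u} [Category.{v} S] {T : Type u₂} [Category.{v} T]
  [HasZeroObject S] [Preadditive S] [HasShift S ℤ]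
  [∀ n : ℤ, (shiftFunctor S n).Additive] [Pretriangulated S] [HasCoproducts.{v} S]
  [HasZeroObject T] [Preadditive T] [HasShift T ℤ]
  [∀ n : ℤ, (shiftFunctor T n).Additive] [Pretriangulated T] [HasCoproducts.{v} T]
  [MonoidalCategory S] [SymmetricCategory S] [MonoidalCategory T] [SymmetricCategory T]
  [∀ X : S, (tensorRight X).CommShift ℤ] [∀ X : S, (tensorRight X).IsTriangulated]
  [∀ (X : S) (J : Type v), PreservesColimitsOfShape (Discrete J) (tensorRight X)]
  [∀ X : T, (tensorRight X).CommShift ℤ] [∀ X : T, (tensorRight X).IsTriangulated]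
  [∀ (X : T) (J : Type v), PreservesColimitsOfShape (Discrete J) (tensorRight X)]
  (F : S ⥤ T) [F.Monoidal] [F.CommShift ℤ] [F.IsTriangulated]
  [∀ J : Type v, PreservesColimitsOfShape (Discrete J) F]
  (Fst : T ⥤ S) [Fst.CommShift ℤ] [Fst.IsTriangulated]
  [∀ J : Type v, PreservesColimitsOfShape (Discrete J) Fst]

/--
in the tensor-triangulated adjunction setting, if `G` is an object of 𝒯
and the unit `1_𝒮` belongs to `⟨f_* G⟩̄ₙ` for some `n ≥ 0`, then every object `E` of 𝒮
belongs to `⟨f_*(G ⊗ f^* E)⟩̄ₙ`.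
-/
theorem statement7 (adj : F ⊣ Fst)
    (proj : ∀ (A : S) (B : T), Nonempty ((A ⊗ Fst.obj B) ≅ Fst.obj (B ⊗ F.obj A)))
    (G : T) (n : ℕ) (hn : (𝟙_ S) ∈ bigLevel (Fst.obj G) n) (E : S) :
    E ∈ bigLevel (Fst.obj (G ⊗ F.obj E)) n := by
  obtain ⟨e⟩ := proj E G
  have h := map_mem_bigLevel (tensorRight E)
    (.of_iso (β_ (Fst.obj G) E ≪≫ e)) hn
  exact bigLevel_retract h (.of_iso (λ_ E).symm)

end Adjunction

end Stmt
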